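/- Herzberger stabilization theorem (Theorem 5.4.2 / Definition 5.4.9): for every family of stage valuations Q : ℕ → Ordinal → Prop there exists an ordinal β such that for every n : ℕ: (i) if n is stably true (there is α with 𝒯Q n γ for all γ ≥ α), then 𝒯Q n γ holds for every γ ≥ β; and (ii) if 𝒯Q n β holds, then n is stably true. -/

import Mathlib

/-! If a sentence is not stably true, it fails at arbitrarily large stages. Start above a stage past
which every stably true sentence already has `truthOp`; this is possible as there are only
countably many sentences. Iterate `ω` times a step to an ordinal below which each non-stably-true
sentence fails again. At the supremum `β` of this sequence every sentence that is not stably true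
fails cofinally below `β`, so `truthOp` at `β` implies stable truth. -/

/-- The truth operator: `𝒯Q α` holds iff the sentence held on a final
segment of stages below `α`. -/
def truthOp (Q : Ordinal → Prop) (α : Ordinal) : Prop :=
  ∃ γ, γ < α ∧ ∀ δ, γ ≤ δ → δ < α → Q δ

/-- `n` is stably true for the family `Q`. -/
def StablyTrue (Q : ℕ → Ordinal → Prop) (n : ℕ) : Prop :=
  ∃ α, ∀ β, β ≥ α → truthOp (Q n) β

/-- A sentence that is not stably true fails at arbitrarily large stages. -/
theorem exists_not_of_not_stablyTrue {Q : ℕ → Ordinal → Prop} {n : ℕ}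
    (h : ¬ StablyTrue Q n) (α : Ordinal) : ∃ δ, α ≤ δ ∧ ¬ Q n δ := by
  by_contra! hc
  exact h ⟨Order.succ α, fun β hβ =>
    ⟨α, (Order.lt_succ α).trans_le hβ, fun δ hδ _ => hc δ hδ⟩⟩

/-- Herzberger stabilization theorem (Theorem 5.4.2 / Definition 5.4.9). -/
theorem herzberger_stabilization (Q : ℕ → Ordinal → Prop) :
    ∃ β : Ordinal, ∀ n : ℕ,
      (StablyTrue Q n → ∀ γ, γ ≥ β → truthOp (Q n) γ) ∧
      (truthOp (Q n) β → StablyTrue Q n) := by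
  have hs : ∀ n, ∃ α, StablyTrue Q n → ∀ γ, γ ≥ α → truthOp (Q n) γ := by
    intro n
    by_cases h : StablyTrue Q n
    · obtain ⟨α, hα⟩ := h
      exact ⟨α, fun _ => hα⟩
    · exact ⟨0, fun h' => absurd h' h⟩
  have hu : ∀ n α, ∃ δ, ¬ StablyTrue Q n → α ≤ δ ∧ ¬ Q n δ := by
    intro n α
    by_cases h : StablyTrue Q n
    · exact ⟨0, fun h' => absurd h h'⟩
    · obtain ⟨δ, hδ⟩ := exists_not_of_not_stablyTrue h α
      exact ⟨δ, fun _ => hδ⟩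
  choose a ha using hs
  choose f hf using hu
  let b : ℕ → Ordinal := fun k =>
    Nat.rec (⨆ n, a n) (fun _ x => ⨆ n, Order.succ (f n x)) k
  refine ⟨⨆ k, b k, fun n => ⟨fun h γ hγ => ha n h γ ?_, ?_⟩⟩
  · exact ((Ordinal.le_iSup a n).trans (Ordinal.le_iSup b 0)).trans hγ
  · rintro ⟨γ, hγ, hQ⟩
    by_contra hn
    obtain ⟨k, hk⟩ := Ordinal.lt_iSup_iff.1 hγ
    obtain ⟨h1, h2⟩ := hf n (b k) hn
    refine h2 (hQ _ (hk.le.trans h1) ((Order.lt_succ _).trans_le ?_))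
    exact (Ordinal.le_iSup (fun n => Order.succ (f n (b k))) n).trans (Ordinal.le_iSup b (k + 1))
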